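/- Let {η_j}_{j≥1} be independent random variables with P{η_k=k}=1/k and P{η_k=0}=1−1/k, and let θ_n = Σ_{j=1}^n η_j. Then for every real λ the characteristic function of θ_n/n, namely ∏_{k=1}^n ( 1 − 1/k + (1/k)·e^{iλk/n} ), converges as n→∞ to exp( ∫_0^1 (e^{iλv}−1)/v dv ) (the integrand extended continuously by iλ at v=0); equivalently, the distributions of θ_n/n converge weakly to the Dickman–De Bruijn distribution. -/

import Mathlib

open Filter MeasureTheory
open scoped Topology

noncomputable section

/-- `φ(λ) = exp(∫_0^1 (e^{iλv}-1)/v dv)`, the characteristic function of the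
Dickman–De Bruijn distribution (integrand extended continuously by `iλ` at `v=0`). -/
def phi (lam : ℝ) : ℂ :=
  Complex.exp (∫ v in (0:ℝ)..1,
    if v = 0 then Complex.I * lam else (Complex.exp (Complex.I * lam * v) - 1) / v)

/-- The probability of the configuration `ν` of the independent variables `η_1,…,η_n`,
where `η_k = k` with probability `1/k` and `η_k = 0` otherwise (`ν k = true` iff `η_{k+1} = k+1`). -/
def massEta (n : ℕ) (ν : Fin n → Bool) : ℝ :=
  ∏ k : Fin n, if ν k then 1 / ((k : ℕ) + 1 : ℝ) else 1 - 1 / ((k : ℕ) + 1 : ℝ)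

/-- The value of `θ_n/n = (1/n) ∑_{j=1}^n η_j` on the configuration `ν`. -/
def thetaOverN (n : ℕ) (ν : Fin n → Bool) : ℝ :=
  (∑ k : Fin n, if ν k then ((k : ℕ) + 1 : ℝ) else 0) / n

/-- The law of `θ_n/n`, as a measure on `ℝ`. -/
def lawTheta (n : ℕ) : Measure ℝ :=
  ∑ ν : Fin n → Bool, ENNReal.ofReal (massEta n ν) • Measure.dirac (thetaOverN n ν)

lemma aux_prod_diff (a b : ℕ → ℂ) (n : ℕ) (ha : ∀ k, ‖a k‖ ≤ 1) (hb : ∀ k, ‖b k‖ ≤ 1) :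
    ‖∏ k ∈ Finset.range n, a k - ∏ k ∈ Finset.range n, b k‖
      ≤ ∑ k ∈ Finset.range n, ‖a k - b k‖ := by
  induction n with
  | zero => simp
  | succ n ih =>
    rw [Finset.prod_range_succ, Finset.prod_range_succ, Finset.sum_range_succ]
    set A := ∏ k ∈ Finset.range n, a k with hA
    set B := ∏ k ∈ Finset.range n, b k with hB
    have hA1 : ‖A‖ ≤ 1 := by
      rw [hA, norm_prod]
      exact Finset.prod_le_one (fun _ _ => norm_nonneg _) (fun i _ => ha i)
    have : A * a n - B * b n = A * (a n - b n) + (A - B) * b n := by ring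
    rw [this]
    calc _ ≤ ‖A * (a n - b n)‖ + ‖(A - B) * b n‖ := norm_add_le _ _
      _ ≤ 1 * ‖a n - b n‖ + ‖A - B‖ * 1 := by
        rw [norm_mul, norm_mul]
        gcongr
        exact hb n
      _ ≤ _ := by linarith

def gfun (lam : ℝ) (v : ℝ) : ℂ :=
  if v = 0 then Complex.I * lam else (Complex.exp (Complex.I * lam * v) - 1) / v

lemma gfun_cont (lam : ℝ) : Continuous (gfun lam) := by
  have hd : ∀ v : ℝ, HasDerivAt (fun v : ℝ => Complex.exp (Complex.I * lam * v))
      (Complex.exp (Complex.I * lam * v) * (Complex.I * lam)) v := by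
    intro v
    have h1 : HasDerivAt (fun v : ℝ => Complex.I * lam * (v:ℂ)) (Complex.I * lam * 1) v :=
      (Complex.ofRealCLM.hasDerivAt (x := v)).const_mul _
    simpa using h1.cexp
  have : gfun lam = dslope (fun v : ℝ => Complex.exp (Complex.I * lam * v)) 0 := by
    ext v
    by_cases hv : v = 0
    · subst hv
      rw [dslope_same, (hd 0).deriv]
      simp [gfun]
    · rw [dslope_of_ne _ hv]
      simp [gfun, hv, slope, div_eq_inv_mul]
  rw [this, continuous_iff_continuousAt]
  intro v
  by_cases hv : v = 0
  · subst hv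
    exact continuousAt_dslope_same.2 (hd 0).differentiableAt
  · exact (continuousAt_dslope_of_ne hv).2 (hd v).continuousAt

lemma gfun_bound (lam v : ℝ) : ‖gfun lam v‖ ≤ |lam| := by
  unfold gfun
  split_ifs with h
  · simp
  · rw [norm_div, div_le_iff₀ (by simpa using h)]
    have := Real.norm_exp_I_mul_ofReal_sub_one_le (x := lam * v)
    simpa [mul_assoc, abs_mul] using this

lemma riemann_sum (g : ℝ → ℂ) (hg : Continuous g) :
    Tendsto (fun n : ℕ => ∑ k ∈ Finset.range n, (1 / (n:ℂ)) * g (((k:ℝ) + 1) / n)) atTop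
      (𝓝 (∫ v in (0:ℝ)..1, g v)) := by
  rw [Metric.tendsto_atTop]
  intro ε hε
  have huc := (isCompact_Icc (a := (0:ℝ)) (b := 1)).uniformContinuousOn_of_continuous hg.continuousOn
  rw [Metric.uniformContinuousOn_iff] at huc
  obtain ⟨δ, hδ, H⟩ := huc (ε / 2) (by positivity)
  obtain ⟨N, hN⟩ := exists_nat_gt (1 / δ)
  refine ⟨N + 1, fun n hn => ?_⟩
  have hn0 : (0:ℝ) < n := by
    have : 0 < n := by omega
    exact_mod_cast this
  have hnδ : 1 / (n:ℝ) < δ := by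
    have h1 : (N:ℝ) ≤ n := by exact_mod_cast (by omega : N ≤ n)
    rw [div_lt_iff₀ hn0]
    rw [div_lt_iff₀ hδ] at hN
    nlinarith
  have hsum := intervalIntegral.sum_integral_adjacent_intervals (f := g) (μ := volume)
    (a := fun k : ℕ => (k:ℝ) / n) (n := n) (fun k _ => hg.intervalIntegrable _ _)
  have e0 : ((0:ℕ):ℝ) / n = 0 := by simp
  have e1 : ((n:ℕ):ℝ) / n = 1 := div_self hn0.ne'
  simp only [e0, e1] at hsum
  rw [← hsum, dist_eq_norm, ← Finset.sum_sub_distrib]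
  have key : ∀ k ∈ Finset.range n, ‖(1 / (n:ℂ)) * g (((k:ℝ) + 1) / n)
      - ∫ v in ((k:ℝ) / n)..(((k + 1 : ℕ):ℝ) / n), g v‖ ≤ ε / 2 * (1 / n) := by
    intro k hk
    have hk' : (k:ℝ) + 1 ≤ n := by exact_mod_cast Finset.mem_range.1 hk
    have hlen : ((k + 1 : ℕ):ℝ) / n - (k:ℝ) / n = 1 / n := by push_cast; ring
    have hc : (1 / (n:ℂ)) * g (((k:ℝ) + 1) / n)
        = ∫ v in ((k:ℝ) / n)..(((k + 1 : ℕ):ℝ) / n), g (((k:ℝ) + 1) / n) := by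
      rw [intervalIntegral.integral_const, hlen]
      simp
    rw [hc, ← intervalIntegral.integral_sub (by simp) (hg.intervalIntegrable _ _)]
    have hle : (k:ℝ) / n ≤ ((k + 1 : ℕ):ℝ) / n := by
      gcongr; omega
    refine (intervalIntegral.norm_integral_le_of_norm_le_const (C := ε / 2) ?_).trans ?_
    · intro x hx
      rw [Set.uIoc_of_le hle] at hx
      obtain ⟨hx1, hx2⟩ := hx
      push_cast at hx2
      have h0 : 0 ≤ (k:ℝ) / n := by positivity
      have h1 : ((k:ℝ) + 1) / n ≤ 1 := by rw [div_le_one hn0]; exact hk'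
      have h2 : ((k:ℝ) + 1) / n = k / n + 1 / n := by ring
      rw [← dist_eq_norm]
      refine (H _ ⟨by positivity, h1⟩ x ⟨by linarith, by linarith⟩ ?_).le
      rw [Real.dist_eq, abs_lt]
      constructor <;> linarith
    · rw [hlen, abs_of_pos (by positivity)]
  calc _ ≤ ∑ k ∈ Finset.range n, ε / 2 * (1 / (n:ℝ)) := norm_sum_le_of_le _ key
    _ = ε / 2 := by simp; field_simp
    _ < ε := by linarith

lemma zfun_norm (lam : ℝ) (k n : ℕ) :
    ‖(1 / (n:ℂ)) * gfun lam (((k:ℝ) + 1) / n)‖ ≤ |lam| / n := by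
  rw [norm_mul]
  have := gfun_bound lam (((k:ℝ) + 1) / n)
  simp only [norm_div, norm_one, Complex.norm_natCast]
  rw [div_eq_mul_one_div |lam|, mul_comm]
  gcongr

lemma zfun_eq (lam : ℝ) (k n : ℕ) (hn : n ≠ 0) :
    (1 / (n:ℂ)) * gfun lam (((k:ℝ) + 1) / n)
      = (1 / ((k:ℂ) + 1)) * (Complex.exp (Complex.I * lam * ((k:ℂ) + 1) / n) - 1) := by
  have h1 : ((k:ℝ) + 1) / n ≠ 0 := by positivity
  have h2 : (n:ℂ) ≠ 0 := by exact_mod_cast hn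
  have h3 : (k:ℂ) + 1 ≠ 0 := by exact_mod_cast (by omega : k + 1 ≠ 0)
  rw [gfun, if_neg h1]
  push_cast
  rw [← mul_div_assoc]
  field_simp

lemma exp_norm_one (x : ℝ) : ‖Complex.exp (Complex.I * x)‖ = 1 := by
  rw [mul_comm]; exact Complex.norm_exp_ofReal_mul_I x

lemma part1 (lam : ℝ) :
      Tendsto (fun n : ℕ => ∏ k ∈ Finset.range n,
          (1 - 1 / ((k : ℝ) + 1) + (1 / ((k : ℝ) + 1)) *
            Complex.exp (Complex.I * lam * ((k : ℝ) + 1) / (n : ℝ))))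
        atTop (𝓝 (phi lam)) := by
  have hR := (riemann_sum (gfun lam) (gfun_cont lam)).cexp
  have hphi : phi lam = Complex.exp (∫ v in (0:ℝ)..1, gfun lam v) := rfl
  rw [hphi]
  have hdiff : Tendsto (fun n : ℕ => (∏ k ∈ Finset.range n,
          (1 - 1 / ((k : ℝ) + 1) + (1 / ((k : ℝ) + 1)) *
            Complex.exp (Complex.I * lam * ((k : ℝ) + 1) / (n : ℝ))))
        - Complex.exp (∑ k ∈ Finset.range n, (1 / (n:ℂ)) * gfun lam (((k:ℝ) + 1) / n)))
        atTop (𝓝 0) := by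
    have hlim : Tendsto (fun n : ℕ => |lam| ^ 2 / (n:ℝ)) atTop (𝓝 0) :=
      tendsto_const_div_atTop_nhds_zero_nat _
    refine squeeze_zero_norm' ?_ hlim
    obtain ⟨N, hN⟩ := exists_nat_gt |lam|
    filter_upwards [eventually_ge_atTop (N + 1)] with n hn
    have hn0 : n ≠ 0 := by omega
    have hnpos : (0:ℝ) < n := by positivity
    have hlam : |lam| / n ≤ 1 := by
      rw [div_le_one hnpos]
      have : (N:ℝ) ≤ n := by exact_mod_cast (by omega : N ≤ n)
      linarith
    rw [Complex.exp_sum]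
    have hz : ∀ k : ℕ, (1 - 1 / (((k : ℝ):ℂ) + 1) + (1 / (((k : ℝ):ℂ) + 1)) *
            Complex.exp (Complex.I * lam * (((k : ℝ):ℂ) + 1) / ((n : ℝ):ℂ)))
            = 1 + (1 / (n:ℂ)) * gfun lam (((k:ℝ) + 1) / n) := by
      intro k
      rw [zfun_eq lam k n hn0]
      push_cast
      ring
    have hE : ∀ k : ℕ, ‖Complex.exp (Complex.I * lam * ((k:ℂ) + 1) / n)‖ = 1 := by
      intro k
      have := exp_norm_one (lam * (k + 1) / n)
      rw [← this]; congr 2; push_cast; ring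
    have hk1 : ∀ k : ℕ, 1 / ((k:ℝ) + 1) ≤ 1 := by
      intro k
      rw [div_le_one (by positivity)]
      have : (0:ℝ) ≤ k := by positivity
      linarith
    refine (aux_prod_diff _ _ n ?_ ?_).trans ?_
    · intro k
      have e1 : (1 - 1 / (((k : ℝ):ℂ) + 1)) = ((1 - 1 / ((k:ℝ) + 1) : ℝ) : ℂ) := by push_cast; ring
      have e2 : (1 / (((k : ℝ):ℂ) + 1)) = ((1 / ((k:ℝ) + 1) : ℝ) : ℂ) := by push_cast; ring
      refine (norm_add_le _ _).trans ?_
      have hE' : ‖Complex.exp (Complex.I * lam * (((k : ℝ):ℂ) + 1) / ((n : ℝ):ℂ))‖ = 1 := by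
        simpa using hE k
      rw [norm_mul, hE', e1, e2, Complex.norm_real, Complex.norm_real, Real.norm_of_nonneg (by linarith [hk1 k]),
        Real.norm_of_nonneg (by positivity)]
      linarith
    · intro k
      rw [Complex.norm_exp, Real.exp_le_one_iff, zfun_eq lam k n hn0]
      have e2 : (1 / ((k:ℂ) + 1)) = ((1 / ((k:ℝ) + 1) : ℝ) : ℂ) := by push_cast; ring
      rw [e2, Complex.re_ofReal_mul]
      have h := Complex.re_le_norm (Complex.exp (Complex.I * lam * ((k:ℂ) + 1) / n))
      rw [hE k] at h
      have : (0:ℝ) ≤ 1 / ((k:ℝ) + 1) := by positivity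
      rw [Complex.sub_re, Complex.one_re]
      nlinarith
    · calc _ ≤ ∑ k ∈ Finset.range n, (|lam| / n) ^ 2 := by
            refine Finset.sum_le_sum fun k _ => ?_
            rw [hz k, norm_sub_rev]
            have hb := zfun_norm lam k n
            have := Complex.norm_exp_sub_one_sub_id_le (hb.trans hlam)
            rw [← sub_sub]
            refine this.trans ?_
            gcongr
        _ = _ := by
            rw [Finset.sum_const, Finset.card_range, nsmul_eq_mul]; field_simp
        _ ≤ _ := le_refl _
  simpa using hdiff.add hR

lemma phi_cont : ContinuousAt phi 0 := by
  have : Tendsto (fun lam : ℝ => ∫ v in (0:ℝ)..1, gfun lam v) (𝓝 0) (𝓝 0) := by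
    refine squeeze_zero_norm (a := fun lam => |lam|) (fun lam => ?_) ?_
    · have := intervalIntegral.norm_integral_le_of_norm_le_const (a := (0:ℝ)) (b := 1)
        (f := gfun lam) (C := |lam|) (fun x _ => gfun_bound lam x)
      simpa using this
    · simpa using (continuous_abs.tendsto (0:ℝ))
  have h2 := this.cexp
  have h0 : phi 0 = Complex.exp 0 := by simp [phi]
  rw [ContinuousAt, h0]
  exact h2

lemma mass_nonneg (n : ℕ) (ν : Fin n → Bool) : 0 ≤ massEta n ν := by
  refine Finset.prod_nonneg fun k _ => ?_
  have : 1 / (((k:ℕ):ℝ) + 1) ≤ 1 := by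
    rw [div_le_one (by positivity)]
    have : (0:ℝ) ≤ (k:ℕ) := by positivity
    linarith
  split_ifs
  · positivity
  · linarith

lemma mass_sum (n : ℕ) : ∑ ν : Fin n → Bool, massEta n ν = 1 := by
  have := Fintype.prod_sum (R := ℝ) (fun (k : Fin n) (b : Bool) =>
    if b then 1 / ((k : ℕ) + 1 : ℝ) else 1 - 1 / ((k : ℕ) + 1 : ℝ))
  unfold massEta
  rw [← this]
  simp

instance law_prob (n : ℕ) : IsProbabilityMeasure (lawTheta n) := by
  constructor
  unfold lawTheta
  rw [Measure.finsetSum_apply]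
  simp only [Measure.smul_apply, measure_univ, smul_eq_mul, mul_one]
  rw [← ENNReal.ofReal_sum_of_nonneg (fun ν _ => mass_nonneg n ν), mass_sum]
  simp

lemma law_charFun (n : ℕ) (lam : ℝ) : charFun (lawTheta n) lam =
    ∏ k ∈ Finset.range n,
          (1 - 1 / ((k : ℝ) + 1) + (1 / ((k : ℝ) + 1)) *
            Complex.exp (Complex.I * lam * ((k : ℝ) + 1) / (n : ℝ))) := by
  rw [charFun_apply_real]
  unfold lawTheta
  rw [integral_finsetSum_measure]
  swap
  · intro ν _
    exact (integrable_dirac (by simp)).smul_measure ENNReal.ofReal_ne_top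
  simp only [integral_smul_measure, integral_dirac]
  have := Fintype.prod_sum (R := ℂ) (fun (k : Fin n) (b : Bool) =>
    (if b then 1 / (((k : ℕ):ℂ) + 1) else 1 - 1 / (((k : ℕ):ℂ) + 1)) *
      Complex.exp (if b then Complex.I * lam * (((k:ℕ):ℂ) + 1) / n else 0))
  rw [Finset.prod_range]
  trans ∏ k : Fin n, ∑ b : Bool, ((if b then 1 / (((k : ℕ):ℂ) + 1) else 1 - 1 / (((k : ℕ):ℂ) + 1)) *
      Complex.exp (if b then Complex.I * lam * (((k:ℕ):ℂ) + 1) / n else 0))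
  · rw [this]
    refine Finset.sum_congr rfl fun ν _ => ?_
    rw [Finset.prod_mul_distrib, ← Complex.exp_sum, ENNReal.toReal_ofReal (mass_nonneg n ν),
      Complex.real_smul]
    congr 1
    · unfold massEta
      push_cast
      refine Finset.prod_congr rfl fun k _ => ?_
      split_ifs <;> simp
    · congr 1
      unfold thetaOverN
      push_cast
      rw [Finset.sum_div, Finset.mul_sum, Finset.sum_mul]
      refine Finset.sum_congr rfl fun k _ => ?_
      split_ifs
      · push_cast; ring
      · simp
  · refine Finset.prod_congr rfl fun k _ => ?_
    simp
    ring

theorem theta_over_n_tendsto_dickman :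
    (∀ lam : ℝ,
      Tendsto (fun n : ℕ => ∏ k ∈ Finset.range n,
          (1 - 1 / ((k : ℝ) + 1) + (1 / ((k : ℝ) + 1)) *
            Complex.exp (Complex.I * lam * ((k : ℝ) + 1) / (n : ℝ))))
        atTop (𝓝 (phi lam))) ∧
    ∃ μ : Measure ℝ, IsProbabilityMeasure μ ∧
      (∀ lam : ℝ, (∫ x, Complex.exp (Complex.I * lam * x) ∂μ) = phi lam) ∧
      ∀ f : BoundedContinuousFunction ℝ ℝ,
        Tendsto (fun n : ℕ => ∫ x, f x ∂(lawTheta n)) atTop (𝓝 (∫ x, f x ∂μ)) := by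
  refine ⟨part1, ?_⟩
  have hch : ∀ t, Tendsto (fun n ↦ charFun (lawTheta n) t) atTop (𝓝 (phi t)) := by
    intro t
    simp_rw [law_charFun]
    exact part1 t
  have htight := isTightMeasureSet_of_tendsto_charFun phi_cont hch
  let P : ℕ → ProbabilityMeasure ℝ := fun n => ⟨lawTheta n, law_prob n⟩
  have hc : IsCompact (closure (Set.range P)) := by
    apply isCompact_closure_of_isTightMeasureSet
    convert htight using 1
    ext x
    constructor
    · rintro ⟨_, ⟨n, rfl⟩, rfl⟩
      exact ⟨n, rfl⟩
    · rintro ⟨n, rfl⟩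
      exact ⟨P n, ⟨n, rfl⟩, rfl⟩
  let U : Ultrafilter ℕ := Ultrafilter.of atTop
  have hU : (U : Filter ℕ) ≤ atTop := Ultrafilter.of_le _
  obtain ⟨μ, -, hμ⟩ := hc.ultrafilter_le_nhds (U.map P)
    (le_principal_iff.2 (mem_of_superset (Filter.range_mem_map) subset_closure))
  have hμ' : Tendsto P U (𝓝 μ) := hμ
  have hcf : ∀ t, charFun (μ : Measure ℝ) t = phi t := by
    intro t
    rw [ProbabilityMeasure.tendsto_iff_forall_integral_rclike_tendsto ℂ] at hμ'
    refine tendsto_nhds_unique ?_ ((hch t).mono_left hU)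
    have := hμ' (BoundedContinuousFunction.innerProbChar t)
    simp_rw [← charFun_eq_integral_innerProbChar] at this
    exact this
  refine ⟨μ, inferInstance, fun lam => ?_, ?_⟩
  · rw [← hcf lam, charFun_apply_real]
    congr 1
    ext x
    congr 1
    ring
  · have hw : Tendsto P atTop (𝓝 μ) := by
      apply ProbabilityMeasure.tendsto_of_tendsto_charFun
      intro t
      rw [hcf t]
      exact hch t
    rw [ProbabilityMeasure.tendsto_iff_forall_integral_tendsto] at hw
    exact hw

end
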